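/- There exists a constant C > 0 such that for every T > 0 and every smooth solution u of the 1-dimensional Schrödinger flow with Neumann boundary conditions on [0,T], for all t ∈ [0,T]: ∫₀¹ |∂_t∂_x³u(x,t)|² dx ≤ C ( ‖u(·,t)‖²_{H³} + ‖∂_t u(·,t)‖²_{H¹} + 1 )⁴ ( ‖∂_t²u(·,t)‖²_{H¹} + 1 ). -/

import Mathlib

open MeasureTheory Set

noncomputable section

abbrev E3 := EuclideanSpace ℝ (Fin 3)

/-- The cross product on `EuclideanSpace ℝ (Fin 3)`. -/
def cross3 (a b : E3) : E3 :=
  (WithLp.equiv 2 (Fin 3 → ℝ)).symm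
    (crossProduct ((WithLp.equiv 2 (Fin 3 → ℝ)) a) ((WithLp.equiv 2 (Fin 3 → ℝ)) b))

/-- Partial derivative in the space variable of `u = u x t`. -/
def pdx (u : ℝ → ℝ → E3) : ℝ → ℝ → E3 := fun x t => deriv (fun y => u y t) x

/-- Partial derivative in the time variable of `u = u x t`. -/
def pdt (u : ℝ → ℝ → E3) : ℝ → ℝ → E3 := fun x t => deriv (fun s => u x s) t

/-- `u` is a smooth solution of the 1-dimensional Schrödinger flow with Neumann
boundary conditions on `[0,1] × [0,T]`. -/
def IsSol (T : ℝ) (u : ℝ → ℝ → E3) : Prop :=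
  ContDiff ℝ (⊤ : ℕ∞) (fun p : ℝ × ℝ => u p.1 p.2) ∧
  (∀ x ∈ Icc (0:ℝ) 1, ∀ t ∈ Icc (0:ℝ) T, ‖u x t‖ = 1) ∧
  (∀ x ∈ Icc (0:ℝ) 1, ∀ t ∈ Icc (0:ℝ) T, pdt u x t = cross3 (u x t) (pdx (pdx u) x t)) ∧
  (∀ t ∈ Icc (0:ℝ) T, pdx u 0 t = 0 ∧ pdx u 1 t = 0)

/-- Squared `L²` norm on `[0,1]`. -/
def L2sq (f : ℝ → E3) : ℝ := ∫ x in (0:ℝ)..1, ‖f x‖ ^ 2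

/-- Squared `H^k` Sobolev norm on `[0,1]`. -/
def Hsq (k : ℕ) (f : ℝ → E3) : ℝ :=
  ∑ j ∈ Finset.range (k + 1), ∫ x in (0:ℝ)..1, ‖deriv^[j] f x‖ ^ 2

lemma cross3_0 (a b : E3) : cross3 a b 0 = a 1 * b 2 - a 2 * b 1 := by
  simp [cross3, crossProduct]

lemma cross3_1 (a b : E3) : cross3 a b 1 = a 2 * b 0 - a 0 * b 2 := by
  simp [cross3, crossProduct]

lemma cross3_2 (a b : E3) : cross3 a b 2 = a 0 * b 1 - a 1 * b 0 := by
  simp [cross3, crossProduct]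

lemma inner3 (a b : E3) : inner ℝ a b = a 0 * b 0 + a 1 * b 1 + a 2 * b 2 := by
  simp [PiLp.inner_apply, Fin.sum_univ_three]; ring

lemma normsq3 (a : E3) : ‖a‖ ^ 2 = a 0 ^ 2 + a 1 ^ 2 + a 2 ^ 2 := by
  rw [← real_inner_self_eq_norm_sq, inner3]; ring

lemma cross3_norm (a b : E3) : ‖cross3 a b‖ ≤ ‖a‖ * ‖b‖ := by
  refine abs_le_of_sq_le_sq' ?_ (by positivity) |>.2
  rw [mul_pow, normsq3, normsq3, normsq3, cross3_0, cross3_1, cross3_2]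
  nlinarith [sq_nonneg (a 0 * b 0 + a 1 * b 1 + a 2 * b 2)]

lemma cross3_self (a : E3) : cross3 a a = 0 := by
  ext i
  fin_cases i
  · show cross3 a a 0 = 0
    rw [cross3_0]; ring
  · show cross3 a a 1 = 0
    rw [cross3_1]; ring
  · show cross3 a a 2 = 0
    rw [cross3_2]; ring

lemma coord_deriv {f : ℝ → E3} {f' : E3} {x : ℝ} (hf : HasDerivAt f f' x) (i : Fin 3) :
    HasDerivAt (fun y => f y i) (f' i) x :=
  (EuclideanSpace.proj (𝕜 := ℝ) i).hasFDerivAt.comp_hasDerivAt x hf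

lemma cross3_deriv {f g : ℝ → E3} {f' g' : E3} {x : ℝ} (hf : HasDerivAt f f' x)
    (hg : HasDerivAt g g' x) :
    HasDerivAt (fun y => cross3 (f y) (g y)) (cross3 f' (g x) + cross3 (f x) g') x := by
  have F := coord_deriv hf
  have G := coord_deriv hg
  rw [← hasDerivWithinAt_univ, hasDerivWithinAt_iff_hasFDerivWithinAt,
    hasFDerivWithinAt_euclidean]
  intro i
  rw [hasFDerivWithinAt_univ]
  suffices HasDerivAt (fun y => cross3 (f y) (g y) i)
      ((cross3 f' (g x) + cross3 (f x) g') i) x by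
    refine this.hasFDerivAt.congr_fderiv ?_
    ext
    simp
  fin_cases i
  · show HasDerivAt (fun y => cross3 (f y) (g y) 0) (cross3 f' (g x) 0 + cross3 (f x) g' 0) x
    simp only [cross3_0]
    refine (((F 1).mul (G 2)).sub ((F 2).mul (G 1))).congr_deriv ?_
    ring
  · show HasDerivAt (fun y => cross3 (f y) (g y) 1) (cross3 f' (g x) 1 + cross3 (f x) g' 1) x
    simp only [cross3_1]
    refine (((F 2).mul (G 0)).sub ((F 0).mul (G 2))).congr_deriv ?_
    ring
  · show HasDerivAt (fun y => cross3 (f y) (g y) 2) (cross3 f' (g x) 2 + cross3 (f x) g' 2) x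
    simp only [cross3_2]
    refine (((F 0).mul (G 1)).sub ((F 1).mul (G 0))).congr_deriv ?_
    ring

lemma alg_uxx (u v p q : E3) (h1 : inner ℝ u u = (1:ℝ)) (hv : v = cross3 u q)
    (h2 : inner ℝ p p + inner ℝ u q = (0:ℝ)) :
    q = - cross3 u v - (inner ℝ p p : ℝ) • u := by
  have e : (inner ℝ p p : ℝ) = - inner ℝ u q := by linarith
  rw [e]
  subst hv
  rw [inner3] at *
  ext i
  fin_cases i
  · show q 0 = - cross3 u (cross3 u q) 0 - _ * u 0
    simp only [cross3_0, cross3_1, cross3_2]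
    linear_combination (-q 0) * h1
  · show q 1 = - cross3 u (cross3 u q) 1 - _ * u 1
    simp only [cross3_0, cross3_1, cross3_2]
    linear_combination (-q 1) * h1
  · show q 2 = - cross3 u (cross3 u q) 2 - _ * u 2
    simp only [cross3_0, cross3_1, cross3_2]
    linear_combination (-q 2) * h1

lemma deriv_eq_of_eqOn {F : Type*} [NormedAddCommGroup F] [NormedSpace ℝ F] {a b x : ℝ}
    (hab : a < b) (hx : x ∈ Icc a b) {f g : ℝ → F} {f' g' : F} (h : ∀ y ∈ Icc a b, f y = g y)
    (hf : HasDerivAt f f' x) (hg : HasDerivAt g g' x) : f' = g' := by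
  have h1 : HasDerivWithinAt f f' (Icc a b) x := hf.hasDerivWithinAt
  have h2 : HasDerivWithinAt f g' (Icc a b) x :=
    (hg.hasDerivWithinAt).congr h (h x hx)
  exact (uniqueDiffOn_Icc hab x hx).eq_deriv _ h1 h2

abbrev Sm (f : ℝ → ℝ → E3) : Prop := ContDiff ℝ (⊤ : ℕ∞) (fun p : ℝ × ℝ => f p.1 p.2)

lemma Sm.dx {f} (h : Sm f) (x t : ℝ) :
    HasDerivAt (fun y => f y t) (pdx f x t) x := by
  have : Differentiable ℝ (fun y => f y t) := by
    have h2 : Differentiable ℝ (fun p : ℝ × ℝ => f p.1 p.2) := h.differentiable (by simp)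
    exact h2.comp (g := fun p : ℝ × ℝ => f p.1 p.2) (f := fun y => (y, t)) (by fun_prop)
  exact (this x).hasDerivAt

lemma Sm.dt {f} (h : Sm f) (x t : ℝ) :
    HasDerivAt (fun s => f x s) (pdt f x t) t := by
  have : Differentiable ℝ (fun s => f x s) := by
    have h2 : Differentiable ℝ (fun p : ℝ × ℝ => f p.1 p.2) := h.differentiable (by simp)
    exact h2.comp (g := fun p : ℝ × ℝ => f p.1 p.2) (f := fun y => (x, y)) (by fun_prop)
  exact (this t).hasDerivAt

lemma Sm.pdx_eq {f} (h : Sm f) (x t : ℝ) :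
    pdx f x t = fderiv ℝ (fun p : ℝ × ℝ => f p.1 p.2) (x, t) (1, 0) := by
  have h2 : HasFDerivAt (fun p : ℝ × ℝ => f p.1 p.2)
      (fderiv ℝ (fun p : ℝ × ℝ => f p.1 p.2) (x, t)) (x, t) :=
    (h.differentiable (by simp) (x, t)).hasFDerivAt
  have h3 : HasDerivAt (fun y : ℝ => (y, t)) (1, 0) x :=
    (hasDerivAt_id x).prodMk (hasDerivAt_const x t)
  exact (h.dx x t).unique (h2.comp_hasDerivAt (f := fun y : ℝ => (y, t)) x h3)

lemma Sm.pdt_eq {f} (h : Sm f) (x t : ℝ) :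
    pdt f x t = fderiv ℝ (fun p : ℝ × ℝ => f p.1 p.2) (x, t) (0, 1) := by
  have h2 : HasFDerivAt (fun p : ℝ × ℝ => f p.1 p.2)
      (fderiv ℝ (fun p : ℝ × ℝ => f p.1 p.2) (x, t)) (x, t) :=
    (h.differentiable (by simp) (x, t)).hasFDerivAt
  have h3 : HasDerivAt (fun y : ℝ => (x, y)) (0, 1) t :=
    (hasDerivAt_const t x).prodMk (hasDerivAt_id t)
  exact (h.dt x t).unique (h2.comp_hasDerivAt (f := fun y : ℝ => (x, y)) t h3)

lemma Sm.fd {f} (h : Sm f) :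
    ContDiff ℝ (⊤ : ℕ∞) (fderiv ℝ (fun p : ℝ × ℝ => f p.1 p.2)) :=
  h.fderiv_right (by simp)

lemma Sm.sx {f} (h : Sm f) : Sm (pdx f) := by
  have : (fun p : ℝ × ℝ => pdx f p.1 p.2) =
      fun p => fderiv ℝ (fun p : ℝ × ℝ => f p.1 p.2) p (1, 0) := by
    ext1 p; exact h.pdx_eq p.1 p.2
  show ContDiff _ _ _
  rw [this]
  exact h.fd.clm_apply contDiff_const

lemma Sm.st {f} (h : Sm f) : Sm (pdt f) := by
  have : (fun p : ℝ × ℝ => pdt f p.1 p.2) =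
      fun p => fderiv ℝ (fun p : ℝ × ℝ => f p.1 p.2) p (0, 1) := by
    ext1 p; exact h.pdt_eq p.1 p.2
  show ContDiff _ _ _
  rw [this]
  exact h.fd.clm_apply contDiff_const

lemma Sm.comm {f} (h : Sm f) : pdt (pdx f) = pdx (pdt f) := by
  funext x t
  have hd : HasFDerivAt (fderiv ℝ (fun p : ℝ × ℝ => f p.1 p.2))
      (fderiv ℝ (fderiv ℝ (fun p : ℝ × ℝ => f p.1 p.2)) (x, t)) (x, t) :=
    (h.fd.differentiable (by simp) (x, t)).hasFDerivAt
  have e1 : ∀ w : ℝ × ℝ, HasFDerivAt (fun p => fderiv ℝ (fun p : ℝ × ℝ => f p.1 p.2) p w)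
      ((fderiv ℝ (fderiv ℝ (fun p : ℝ × ℝ => f p.1 p.2)) (x, t)).flip w) (x, t) := fun w => by
    have := hd.clm_apply (hasFDerivAt_const w (x, t))
    simpa using this
  have ht : HasDerivAt (fun y : ℝ => (x, y)) (0, 1) t :=
    (hasDerivAt_const t x).prodMk (hasDerivAt_id t)
  have hx : HasDerivAt (fun y : ℝ => (y, t)) (1, 0) x :=
    (hasDerivAt_id x).prodMk (hasDerivAt_const x t)
  have a1 := (e1 (1, 0)).comp_hasDerivAt (f := fun y : ℝ => (x, y)) t ht
  have a2 := (e1 (0, 1)).comp_hasDerivAt (f := fun y : ℝ => (y, t)) x hx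
  have b1 := h.sx.dt x t
  have b2 := h.st.dx x t
  have q1 : (fun s => pdx f x s) =
      (fun p => fderiv ℝ (fun p : ℝ × ℝ => f p.1 p.2) p (1, 0)) ∘ fun y : ℝ => (x, y) := by
    ext1 s; exact h.pdx_eq x s
  have q2 : (fun y => pdt f y t) =
      (fun p => fderiv ℝ (fun p : ℝ × ℝ => f p.1 p.2) p (0, 1)) ∘ fun y : ℝ => (y, t) := by
    ext1 s; exact h.pdt_eq s t
  rw [q1] at b1
  rw [q2] at b2
  have c1 := b1.unique a1
  have c2 := b2.unique a2
  rw [c1, c2]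
  have hs : IsSymmSndFDerivAt ℝ (fun p : ℝ × ℝ => f p.1 p.2) (x, t) :=
    (ContDiff.contDiffAt h).isSymmSndFDerivAt (by
      simp only [minSmoothness_of_isRCLikeNormedField]
      exact WithTop.coe_le_coe.2 (le_top : (2 : ℕ∞) ≤ ⊤))
  exact hs.eq _ _

lemma Sm.cont {f} (h : Sm f) (t : ℝ) : Continuous (fun x => f x t) :=
  h.continuous.comp (g := fun p : ℝ × ℝ => f p.1 p.2) (f := fun y => (y, t)) (by fun_prop)

lemma sup_bound {f f' : ℝ → E3} (hd : ∀ x, HasDerivAt f (f' x) x) (hc : Continuous f')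
    {x : ℝ} (hx : x ∈ Icc (0:ℝ) 1) :
    ‖f x‖ ^ 2 ≤ 2 * ((∫ y in (0:ℝ)..1, ‖f y‖ ^ 2) + ∫ y in (0:ℝ)..1, ‖f' y‖ ^ 2) := by
  have hfc : Continuous f := continuous_iff_continuousAt.2 fun x => (hd x).continuousAt
  set h : ℝ → ℝ := fun y => ‖f y‖ ^ 2 + ‖f' y‖ ^ 2 with hh
  have hhc : Continuous h := by fun_prop
  have hh0 : ∀ y, 0 ≤ h y := fun y => by positivity
  have hI : (∫ y in (0:ℝ)..1, h y) =
      (∫ y in (0:ℝ)..1, ‖f y‖ ^ 2) + ∫ y in (0:ℝ)..1, ‖f' y‖ ^ 2 :=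
    intervalIntegral.integral_add (Continuous.intervalIntegrable (by fun_prop) _ _)
      (Continuous.intervalIntegrable (by fun_prop) _ _)
  have key : ∀ y ∈ Icc (0:ℝ) 1, ‖f x‖ ^ 2 ≤ ‖f y‖ ^ 2 + ∫ z in (0:ℝ)..1, h z := by
    intro y hy
    have e : (∫ z in y..x, 2 * inner ℝ (f z) (f' z)) = ‖f x‖ ^ 2 - ‖f y‖ ^ 2 :=
      intervalIntegral.integral_eq_sub_of_hasDerivAt (f := fun z => ‖f z‖ ^ 2)
        (fun z _ => (hd z).norm_sq)
        (Continuous.intervalIntegrable (by fun_prop) _ _)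
    have e2 : ‖∫ z in y..x, 2 * inner ℝ (f z) (f' z)‖ ≤ |∫ z in y..x, h z| := by
      apply intervalIntegral.norm_integral_le_abs_of_norm_le
      · refine Filter.Eventually.of_forall fun z => ?_
        have := abs_real_inner_le_norm (f z) (f' z)
        rw [Real.norm_eq_abs, abs_mul, abs_two]
        simp only [hh]
        nlinarith [sq_nonneg (‖f z‖ - ‖f' z‖)]
      · exact hhc.intervalIntegrable _ _
    have e3 : |∫ z in y..x, h z| ≤ |∫ z in (0:ℝ)..1, h z| := by
      apply intervalIntegral.abs_integral_mono_interval
      · rw [uIoc_of_le zero_le_one, uIoc]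
        exact Ioc_subset_Ioc (le_min hy.1 hx.1) (max_le hy.2 hx.2)
      · exact Filter.Eventually.of_forall hh0
      · exact hhc.intervalIntegrable _ _
    rw [abs_of_nonneg (intervalIntegral.integral_nonneg zero_le_one fun z _ => hh0 z)] at e3
    rw [e, Real.norm_eq_abs] at e2
    linarith [le_abs_self (‖f x‖ ^ 2 - ‖f y‖ ^ 2)]
  have m := intervalIntegral.integral_mono_on zero_le_one
    (Continuous.intervalIntegrable (u := fun _ : ℝ => ‖f x‖ ^ 2) continuous_const 0 1)
    (Continuous.intervalIntegrable (μ := volume)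
      (u := fun y : ℝ => ‖f y‖ ^ 2 + ∫ z in (0:ℝ)..1, h z) (by fun_prop) 0 1) key
  rw [intervalIntegral.integral_add (Continuous.intervalIntegrable (by fun_prop) _ _)
    (Continuous.intervalIntegrable (by fun_prop) _ _)] at m
  simp only [intervalIntegral.integral_const, sub_zero, one_smul] at m
  rw [hI] at m
  have : 0 ≤ ∫ y in (0:ℝ)..1, ‖f' y‖ ^ 2 :=
    intervalIntegral.integral_nonneg zero_le_one fun z _ => by positivity
  linarith

lemma pointwise {T : ℝ} (hT : 0 < T) {u : ℝ → ℝ → E3} (hu : IsSol T u) {M t : ℝ}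
    (ht : t ∈ Icc (0:ℝ) T) (hM : 1 ≤ M) {x : ℝ} (hx : x ∈ Icc (0:ℝ) 1)
    (h1 : ‖pdx u x t‖ ≤ M) (h2 : ‖pdx (pdx u) x t‖ ≤ M) :
    ‖pdt (pdx (pdx (pdx u))) x t‖ ≤ 3 * M * ‖pdt (pdt u) x t‖ + ‖pdx (pdt (pdt u)) x t‖
      + 9 * M ^ 2 * ‖pdx (pdt u) x t‖ + 4 * M ^ 3 * ‖pdt u x t‖ := by
  obtain ⟨hs, hn, he, -⟩ := hu
  have hs : Sm u := hs
  have P0 : ∀ x ∈ Icc (0:ℝ) 1, ∀ t ∈ Icc (0:ℝ) T, inner ℝ (u x t) (u x t) = (1:ℝ) := by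
    intro x hx t ht
    rw [real_inner_self_eq_norm_sq, hn x hx t ht]; norm_num
  have P1 : ∀ x ∈ Icc (0:ℝ) 1, ∀ t ∈ Icc (0:ℝ) T, inner ℝ (u x t) (pdx u x t) = (0:ℝ) := by
    intro x hx t ht
    have := deriv_eq_of_eqOn zero_lt_one hx (fun y hy => P0 y hy t ht)
      ((hs.dx x t).inner ℝ (hs.dx x t)) (hasDerivAt_const x (1:ℝ))
    rw [real_inner_comm (u x t) (pdx u x t)] at this
    rw [real_inner_comm] at this ⊢
    linarith
  have P1b : ∀ x ∈ Icc (0:ℝ) 1, ∀ t ∈ Icc (0:ℝ) T,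
      inner ℝ (pdx u x t) (pdx u x t) + inner ℝ (u x t) (pdx (pdx u) x t) = (0:ℝ) := by
    intro x hx t ht
    have := deriv_eq_of_eqOn zero_lt_one hx (fun y hy => P1 y hy t ht)
      ((hs.dx x t).inner ℝ (hs.sx.dx x t)) (hasDerivAt_const x (0:ℝ))
    linarith
  have P2 : ∀ x ∈ Icc (0:ℝ) 1, ∀ t ∈ Icc (0:ℝ) T, pdx (pdx u) x t =
      - cross3 (u x t) (pdt u x t) - (inner ℝ (pdx u x t) (pdx u x t) : ℝ) • u x t :=
    fun x hx t ht => alg_uxx _ _ _ _ (P0 x hx t ht) (he x hx t ht) (P1b x hx t ht)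
  have c1 : pdt (pdx u) = pdx (pdt u) := hs.comm
  have c2 : pdt (pdx (pdx u)) = pdx (pdx (pdt u)) := by rw [hs.sx.comm, c1]
  have c3 : pdt (pdx (pdx (pdx u))) = pdx (pdx (pdx (pdt u))) := by rw [hs.sx.sx.comm, c2]
  have P3 : ∀ x ∈ Icc (0:ℝ) 1, ∀ t ∈ Icc (0:ℝ) T, pdx (pdx (pdt u)) x t =
      - cross3 (u x t) (pdt (pdt u) x t)
       - ((inner ℝ (pdx u x t) (pdx u x t) : ℝ) • pdt u x t
        + (2 * inner ℝ (pdx u x t) (pdx (pdt u) x t) : ℝ) • u x t) := by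
    intro x hx t ht
    have := deriv_eq_of_eqOn hT ht (fun s hs => P2 x hx s hs) (hs.sx.sx.dt x t)
      ((cross3_deriv (hs.dt x t) (hs.st.dt x t)).neg.sub
        (((hs.sx.dt x t).inner ℝ (hs.sx.dt x t)).smul (hs.dt x t)))
    rw [c2, c1, cross3_self, zero_add, real_inner_comm (pdx (pdt u) x t) (pdx u x t),
      ← two_mul] at this
    rw [this, real_inner_comm (pdx (pdt u) x t) (pdx u x t)]
  have P4 := deriv_eq_of_eqOn zero_lt_one hx (fun y hy => P3 y hy t ht) (hs.st.sx.sx.dx x t)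
    ((cross3_deriv (hs.dx x t) (hs.st.st.dx x t)).neg.sub
      ((((hs.sx.dx x t).inner ℝ (hs.sx.dx x t)).smul (hs.st.dx x t)).add
        ((((hs.sx.dx x t).inner ℝ (hs.st.sx.dx x t)).const_mul 2).smul (hs.dx x t))))
  have Q3 := P3 x hx t ht
  have hn1 := hn x hx t ht
  rw [c3]
  generalize pdx (pdx (pdx (pdt u))) x t = vxxx at *
  generalize pdx (pdx (pdt u)) x t = vxx at *
  generalize pdx (pdt u) x t = vx at *
  generalize pdx (pdt (pdt u)) x t = wx at *
  generalize pdt (pdt u) x t = w at *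
  generalize pdt u x t = v at *
  generalize pdx (pdx u) x t = q at *
  generalize pdx u x t = p at *
  generalize u x t = u0 at *
  have B : ‖vxx‖ ≤ ‖w‖ + 2 * M * ‖vx‖ + M ^ 2 * ‖v‖ := by
    rw [Q3]
    have i1 := cross3_norm u0 w
    have i2 := abs_real_inner_le_norm p p
    have i3 := abs_real_inner_le_norm p vx
    rw [hn1, one_mul] at i1
    calc _ ≤ ‖cross3 u0 w‖ + (|inner ℝ p p| * ‖v‖ + 2 * |inner ℝ p vx| * ‖u0‖) := by
          refine (norm_sub_le _ _).trans ?_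
          rw [norm_neg]
          gcongr
          refine (norm_add_le _ _).trans ?_
          rw [norm_smul, norm_smul, norm_mul]
          simp [Real.norm_eq_abs]
      _ ≤ ‖w‖ + ((M * M) * ‖v‖ + 2 * (M * ‖vx‖) * 1) := by
          rw [hn1]
          gcongr
          · exact i2.trans (by gcongr)
          · exact i3.trans (by gcongr)
      _ = _ := by ring
  have hM0 : 0 ≤ M := by linarith
  have j1 : ‖cross3 p w‖ ≤ M * ‖w‖ := (cross3_norm _ _).trans (by gcongr)
  have j2 : ‖cross3 u0 wx‖ ≤ ‖wx‖ := (cross3_norm _ _).trans (by rw [hn1, one_mul])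
  have j3 : |inner ℝ p p| ≤ M * M := (abs_real_inner_le_norm _ _).trans (by gcongr)
  have j4 : |inner ℝ p q| ≤ M * M := (abs_real_inner_le_norm _ _).trans (by gcongr)
  have j5 : |inner ℝ q p| ≤ M * M := (abs_real_inner_le_norm _ _).trans (by gcongr)
  have j6 : |inner ℝ p vx| ≤ M * ‖vx‖ := (abs_real_inner_le_norm _ _).trans (by gcongr)
  have j7 : |inner ℝ q vx| ≤ M * ‖vx‖ := (abs_real_inner_le_norm _ _).trans (by gcongr)
  have j8 : |inner ℝ p vxx| ≤ M * (‖w‖ + 2 * M * ‖vx‖ + M ^ 2 * ‖v‖) :=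
    (abs_real_inner_le_norm _ _).trans (by gcongr)
  rw [P4]
  calc _ ≤ (‖cross3 p w‖ + ‖cross3 u0 wx‖) + ((|inner ℝ p p| * ‖vx‖
        + (|inner ℝ p q| + |inner ℝ q p|) * ‖v‖)
        + (2 * |inner ℝ p vx| * ‖p‖ + 2 * (|inner ℝ p vxx| + |inner ℝ q vx|) * ‖u0‖)) := by
        refine (norm_sub_le _ _).trans ?_
        rw [norm_neg]
        refine add_le_add (norm_add_le _ _) ((norm_add_le _ _).trans (add_le_add
          ((norm_add_le _ _).trans (add_le_add ?_ ?_))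
          ((norm_add_le _ _).trans (add_le_add ?_ ?_))))
        · rw [norm_smul, Real.norm_eq_abs]
        · rw [norm_smul, Real.norm_eq_abs]
          gcongr
          exact abs_add_le _ _
        · rw [norm_smul, Real.norm_eq_abs, abs_mul, abs_two]
        · rw [norm_smul, Real.norm_eq_abs, abs_mul, abs_two]
          gcongr
          exact abs_add_le _ _
    _ ≤ (M * ‖w‖ + ‖wx‖) + ((M * M * ‖vx‖ + (M * M + M * M) * ‖v‖)
        + (2 * (M * ‖vx‖) * M
          + 2 * (M * (‖w‖ + 2 * M * ‖vx‖ + M ^ 2 * ‖v‖) + M * ‖vx‖) * 1)) := by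
        rw [hn1]
        gcongr
    _ ≤ _ := by
        have l1 : M ≤ M ^ 2 := le_self_pow₀ hM (by norm_num)
        have l2 : M ^ 2 ≤ M ^ 3 := pow_le_pow_right₀ hM (by norm_num)
        nlinarith [mul_le_mul_of_nonneg_right l1 (norm_nonneg vx),
          mul_le_mul_of_nonneg_right l2 (norm_nonneg v)]

theorem utxxx_estimate_schrodinger_flow :
    ∃ C > (0:ℝ), ∀ T > (0:ℝ), ∀ u : ℝ → ℝ → E3, IsSol T u →
      ∀ t ∈ Icc (0:ℝ) T,
        (∫ x in (0:ℝ)..1, ‖pdt (pdx (pdx (pdx u))) x t‖ ^ 2)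
          ≤ C * (Hsq 3 (fun x => u x t) + Hsq 1 (fun x => pdt u x t) + 1) ^ 4
            * (Hsq 1 (fun x => pdt (pdt u) x t) + 1) := by
  refine ⟨100000, by norm_num, fun T hT u hu t ht => ?_⟩
  have hs : Sm u := hu.1
  set A := Hsq 3 (fun x => u x t) + Hsq 1 (fun x => pdt u x t) + 1 with hA
  set B := Hsq 1 (fun x => pdt (pdt u) x t) + 1 with hB
  have nn : ∀ f : ℝ → ℝ → E3, 0 ≤ ∫ x in (0:ℝ)..1, ‖f x t‖ ^ 2 := fun f =>
    intervalIntegral.integral_nonneg zero_le_one fun z _ => by positivity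
  have hA' : A = (∫ x in (0:ℝ)..1, ‖u x t‖ ^ 2) + (∫ x in (0:ℝ)..1, ‖pdx u x t‖ ^ 2)
      + (∫ x in (0:ℝ)..1, ‖pdx (pdx u) x t‖ ^ 2) + (∫ x in (0:ℝ)..1, ‖pdx (pdx (pdx u)) x t‖ ^ 2)
      + ((∫ x in (0:ℝ)..1, ‖pdt u x t‖ ^ 2) + (∫ x in (0:ℝ)..1, ‖pdx (pdt u) x t‖ ^ 2)) + 1 := by
    simp only [hA, Hsq, Finset.sum_range_succ, Finset.sum_range_zero, zero_add]
    rfl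
  have hB' : B = (∫ x in (0:ℝ)..1, ‖pdt (pdt u) x t‖ ^ 2)
      + (∫ x in (0:ℝ)..1, ‖pdx (pdt (pdt u)) x t‖ ^ 2) + 1 := by
    simp only [hB, Hsq, Finset.sum_range_succ, Finset.sum_range_zero, zero_add]
    rfl
  clear_value A B
  have n0 := nn u
  have n1 := nn (pdx u)
  have n2 := nn (pdx (pdx u))
  have n3 := nn (pdx (pdx (pdx u)))
  have n4 := nn (pdt u)
  have n5 := nn (pdx (pdt u))
  have n6 := nn (pdt (pdt u))
  have n7 := nn (pdx (pdt (pdt u)))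
  have A1 : 1 ≤ A := by linarith
  have B1 : 1 ≤ B := by linarith
  set M := Real.sqrt (2 * A) with hMd
  have M2 : M ^ 2 = 2 * A := Real.sq_sqrt (by linarith)
  have M0 : 0 ≤ M := Real.sqrt_nonneg _
  have M1 : 1 ≤ M := by nlinarith
  have s1 : ∀ x ∈ Icc (0:ℝ) 1, ‖pdx u x t‖ ≤ M := fun x hx =>
    Real.le_sqrt_of_sq_le (by
      have := sup_bound (fun x => hs.sx.dx x t) (hs.sx.sx.cont t) hx
      linarith)
  have s2 : ∀ x ∈ Icc (0:ℝ) 1, ‖pdx (pdx u) x t‖ ≤ M := fun x hx =>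
    Real.le_sqrt_of_sq_le (by
      have := sup_bound (fun x => hs.sx.sx.dx x t) (hs.sx.sx.sx.cont t) hx
      linarith)
  have k1 := hs.sx.sx.sx.st.cont t
  have k2 := hs.st.cont t
  have k3 := hs.st.sx.cont t
  have k4 := hs.st.st.cont t
  have k5 := hs.st.st.sx.cont t
  have m := intervalIntegral.integral_mono_on zero_le_one
    (Continuous.intervalIntegrable (μ := volume)
      (u := fun x : ℝ => ‖pdt (pdx (pdx (pdx u))) x t‖ ^ 2) (by fun_prop) 0 1)
    (Continuous.intervalIntegrable (μ := volume)
      (u := fun x : ℝ => 324 * M ^ 6 * (‖pdt (pdt u) x t‖ ^ 2 + ‖pdx (pdt (pdt u)) x t‖ ^ 2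
        + ‖pdx (pdt u) x t‖ ^ 2 + ‖pdt u x t‖ ^ 2)) (by fun_prop) 0 1) (by
      intro x hx
      have := pointwise hT hu ht M1 hx (s1 x hx) (s2 x hx)
      have g0 := norm_nonneg (pdt (pdx (pdx (pdx u))) x t)
      have g1 := norm_nonneg (pdt (pdt u) x t)
      have g2 := norm_nonneg (pdx (pdt (pdt u)) x t)
      have g3 := norm_nonneg (pdx (pdt u) x t)
      have g4 := norm_nonneg (pdt u x t)
      generalize ‖pdt (pdx (pdx (pdx u))) x t‖ = z at *
      generalize ‖pdt (pdt u) x t‖ = a at *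
      generalize ‖pdx (pdt (pdt u)) x t‖ = b at *
      generalize ‖pdx (pdt u) x t‖ = c at *
      generalize ‖pdt u x t‖ = d at *
      have l1 : M ≤ M ^ 3 := le_self_pow₀ M1 (by norm_num)
      have l2 : M ^ 2 ≤ M ^ 3 := pow_le_pow_right₀ M1 (by norm_num)
      have l3 : 1 ≤ M ^ 3 := one_le_pow₀ M1
      have : z ≤ 9 * M ^ 3 * (a + b + c + d) := by
        nlinarith [mul_le_mul_of_nonneg_right l1 g1, mul_le_mul_of_nonneg_right l2 g3,
          mul_le_mul_of_nonneg_right l3 g2, mul_nonneg (by linarith : 0 ≤ M ^ 3) g1,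
          mul_nonneg (by linarith : 0 ≤ M ^ 3) g2, mul_nonneg (by linarith : 0 ≤ M ^ 3) g4]
      calc z ^ 2 ≤ (9 * M ^ 3 * (a + b + c + d)) ^ 2 := pow_le_pow_left₀ g0 this 2
        _ = 81 * M ^ 6 * (a + b + c + d) ^ 2 := by ring
        _ ≤ 81 * M ^ 6 * (4 * (a ^ 2 + b ^ 2 + c ^ 2 + d ^ 2)) := by
          gcongr
          nlinarith [sq_nonneg (a - b), sq_nonneg (a - c), sq_nonneg (a - d), sq_nonneg (b - c),
            sq_nonneg (b - d), sq_nonneg (c - d)]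
        _ = _ := by ring)
  have M6 : M ^ 6 = 8 * A ^ 3 := by
    calc M ^ 6 = (M ^ 2) ^ 3 := by ring
      _ = _ := by rw [M2]; ring
  rw [intervalIntegral.integral_const_mul,
    intervalIntegral.integral_add (Continuous.intervalIntegrable (by fun_prop) _ _)
      (Continuous.intervalIntegrable (by fun_prop) _ _),
    intervalIntegral.integral_add (Continuous.intervalIntegrable (by fun_prop) _ _)
      (Continuous.intervalIntegrable (by fun_prop) _ _),
    intervalIntegral.integral_add (Continuous.intervalIntegrable (by fun_prop) _ _)
      (Continuous.intervalIntegrable (by fun_prop) _ _), M6] at m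
  refine m.trans ?_
  have A3 : 0 ≤ A ^ 3 := by positivity
  calc _ ≤ 324 * (8 * A ^ 3) * (2 * (A * B)) := by
        gcongr
        nlinarith
    _ = 5184 * (A ^ 4 * B) := by ring
    _ ≤ 100000 * (A ^ 4 * B) := by gcongr; norm_num
    _ = _ := by ring

end
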